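/- In the Farey graph (vertex set Q̂, edges given by ⊥), there is no 4-cycle: if α, β, γ, δ are four pairwise distinct elements of Q̂ with α ⊥ β ⊥ γ ⊥ δ ⊥ α, then at least one of α ⊥ γ or β ⊥ δ holds. -/

import Mathlib

/-!
The argument rests on the Plücker relation
`det a c * det b d = det a b * det c d + det a d * det b c`.
On a 4-cycle `a, b, c, d` each of the four determinants on the right is `±1`, so the right side
is `0` or `±2`. If it is `0`, then `det a c` or `det b d` vanishes, and two common neighbours of
a point with zero determinant are equal up to sign (`eq_or_eq_neg_of_det_eq_zero`), contrary to
distinctness. If it is `±2`, then, `2` being prime, one of the two diagonal determinants is `±1`.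
-/

/-- The determinant of two integer vectors. -/
def det (v w : ℤ × ℤ) : ℤ := v.1 * w.2 - w.1 * v.2

/-- The unimodular (Farey) relation: determinant `±1`. -/
def FareyPair (v w : ℤ × ℤ) : Prop := det v w = 1 ∨ det v w = -1

/-- Coprime integer pairs. -/
abbrev CP : Type := {v : ℤ × ℤ // IsCoprime v.1 v.2}

instance cpSetoid : Setoid CP where
  r v w := v.1 = w.1 ∨ v.1 = -w.1
  iseqv := by
    refine ⟨fun _ => Or.inl rfl, ?_, ?_⟩
    · rintro v w (h | h)
      · exact Or.inl h.symm
      · exact Or.inr (by rw [h, neg_neg])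
    · rintro u v w (h1 | h1) (h2 | h2)
      · exact Or.inl (h1.trans h2)
      · exact Or.inr (h1.trans h2)
      · exact Or.inr (by rw [h1, h2])
      · exact Or.inl (by rw [h1, h2, neg_neg])

/-- `Q̂ = Q ∪ {∞}`: coprime integer pairs up to sign. -/
def Qhat : Type := Quotient cpSetoid

def Qhat.mk (v : ℤ × ℤ) (h : IsCoprime v.1 v.2) : Qhat := ⟦⟨v, h⟩⟧

lemma det_neg_left (v w : ℤ × ℤ) : det (-v) w = -(det v w) := by
  simp only [det, Prod.fst_neg, Prod.snd_neg]; ring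

lemma det_neg_right (v w : ℤ × ℤ) : det v (-w) = -(det v w) := by
  simp only [det, Prod.fst_neg, Prod.snd_neg]; ring

lemma fareyPair_neg_left (v w : ℤ × ℤ) : FareyPair (-v) w ↔ FareyPair v w := by
  unfold FareyPair; rw [det_neg_left]; omega

lemma fareyPair_neg_right (v w : ℤ × ℤ) : FareyPair v (-w) ↔ FareyPair v w := by
  unfold FareyPair; rw [det_neg_right]; omega

lemma farey_well {a b a' b' : CP} (ha : a ≈ a') (hb : b ≈ b') :
    FareyPair a.1 b.1 ↔ FareyPair a'.1 b'.1 := by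
  rcases ha with h | h <;> rcases hb with h' | h' <;> rw [h, h'] <;>
    simp [fareyPair_neg_left, fareyPair_neg_right]

/-- The Farey relation on `Q̂`. -/
def Frel : Qhat → Qhat → Prop :=
  Quotient.lift₂ (fun v w : CP => FareyPair v.1 w.1)
    (fun _ _ _ _ ha hb => propext (farey_well ha hb))

/-- The product (signed mediant): for `λ = det v w`, `(p + λ p', q + λ q')`. -/
def fmul (v w : ℤ × ℤ) : ℤ × ℤ := (v.1 + det v w * w.1, v.2 + det v w * w.2)

lemma isCoprime_of_det {v w : ℤ × ℤ} (h : det v w = 1 ∨ det v w = -1) :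
    IsCoprime v.1 v.2 := by
  rcases h with h | h
  · exact ⟨w.2, -w.1, by simp only [det] at h; linarith [h]⟩
  · exact ⟨-w.2, w.1, by simp only [det] at h; linarith [h]⟩

lemma isCoprime_fmul {v w : ℤ × ℤ} (h : FareyPair v w) :
    IsCoprime (fmul v w).1 (fmul v w).2 := by
  have h2 : det v w * det v w = 1 := by rcases h with h | h <;> rw [h] <;> ring
  refine ⟨det v w * w.2, -(det v w * w.1), ?_⟩
  simp only [fmul, det] at h2 ⊢
  linear_combination h2

/-- The product on `Q̂`, defined for Farey-related representatives. -/
def qprod (v w : CP) (h : FareyPair v.1 w.1) : Qhat :=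
  Qhat.mk (fmul v.1 w.1) (isCoprime_fmul h)

/-- Height `|p| + |q|` on `Q̂`. -/
def qheight : Qhat → ℕ :=
  Quotient.lift (fun v : CP => v.1.1.natAbs + v.1.2.natAbs)
    (by rintro v w (h | h) <;>
      simp only [h, Prod.fst_neg, Prod.snd_neg, Int.natAbs_neg])

/-- Action of an integer matrix on `ℤ × ℤ`. -/
def matAct (A : Matrix (Fin 2) (Fin 2) ℤ) (v : ℤ × ℤ) : ℤ × ℤ :=
  (A 0 0 * v.1 + A 0 1 * v.2, A 1 0 * v.1 + A 1 1 * v.2)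

lemma det_matAct (A : Matrix (Fin 2) (Fin 2) ℤ) (v w : ℤ × ℤ) :
    det (matAct A v) (matAct A w) = A.det * det v w := by
  simp only [matAct, det, Matrix.det_fin_two]; ring

lemma isCoprime_matAct (A : GL (Fin 2) ℤ) (v : ℤ × ℤ) (h : IsCoprime v.1 v.2) :
    IsCoprime (matAct (A : Matrix (Fin 2) (Fin 2) ℤ) v).1
      (matAct (A : Matrix (Fin 2) (Fin 2) ℤ) v).2 := by
  obtain ⟨x, y, hxy⟩ := h
  have hdv : det v (-y, x) = 1 := by simp only [det]; linarith [hxy]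
  have hdA : (A : Matrix (Fin 2) (Fin 2) ℤ).det = 1 ∨
      (A : Matrix (Fin 2) (Fin 2) ℤ).det = -1 := by
    have : IsUnit (A : Matrix (Fin 2) (Fin 2) ℤ).det :=
      (Matrix.isUnit_iff_isUnit_det _).mp A.isUnit
    rwa [Int.isUnit_iff] at this
  apply isCoprime_of_det (w := matAct (A : Matrix (Fin 2) (Fin 2) ℤ) (-y, x))
  rw [det_matAct, hdv, mul_one]
  exact hdA

lemma matAct_neg (A : Matrix (Fin 2) (Fin 2) ℤ) (v : ℤ × ℤ) :
    matAct A (-v) = -(matAct A v) := by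
  simp only [matAct, Prod.fst_neg, Prod.snd_neg, Prod.neg_mk, Prod.mk.injEq]
  constructor <;> ring

/-- The action of `GL(2,ℤ)` on `Q̂`. -/
def qAct (A : GL (Fin 2) ℤ) : Qhat → Qhat :=
  Quotient.lift
    (fun v : CP => (⟦⟨matAct (A : Matrix (Fin 2) (Fin 2) ℤ) v.1,
      isCoprime_matAct A v.1 v.2⟩⟧ : Qhat))
    (by
      rintro v w (h | h)
      · exact Quotient.sound
          (Or.inl (congrArg (matAct (A : Matrix (Fin 2) (Fin 2) ℤ)) h))
      · refine Quotient.sound (Or.inr ?_)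
        show matAct (A : Matrix (Fin 2) (Fin 2) ℤ) v.1 =
          -(matAct (A : Matrix (Fin 2) (Fin 2) ℤ) w.1)
        rw [h, matAct_neg])

lemma isCoprime_one_zero : IsCoprime (1 : ℤ) (0 : ℤ) := isCoprime_one_left
lemma isCoprime_zero_one : IsCoprime (0 : ℤ) (1 : ℤ) := isCoprime_one_right
lemma isCoprime_one_one : IsCoprime (1 : ℤ) (1 : ℤ) := isCoprime_one_left

/-- The point `∞ = (1,0)`. -/
def qinf : Qhat := Qhat.mk (1, 0) isCoprime_one_zero
/-- The point `0 = (0,1)`. -/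
def qzero : Qhat := Qhat.mk (0, 1) isCoprime_zero_one
/-- The point `1 = (1,1)`. -/
def qone : Qhat := Qhat.mk (1, 1) isCoprime_one_one

/-- Two neighbours `a`, `c` of `b` with `det a c = 0` agree up to sign, because
`det a b • c = det c b • a + det a c • b`. -/
lemma eq_or_eq_neg_of_det_eq_zero {a b c : ℤ × ℤ} (hab : FareyPair a b) (hbc : FareyPair b c)
    (h : det a c = 0) : a = c ∨ a = -c := by
  obtain ⟨a₁, a₂⟩ := a
  obtain ⟨b₁, b₂⟩ := b
  obtain ⟨c₁, c₂⟩ := c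
  simp only [FareyPair, det] at hab hbc h
  have e₁ : (a₁ * b₂ - b₁ * a₂) * c₁ = -(b₁ * c₂ - c₁ * b₂) * a₁ := by
    linear_combination b₁ * h
  have e₂ : (a₁ * b₂ - b₁ * a₂) * c₂ = -(b₁ * c₂ - c₁ * b₂) * a₂ := by
    linear_combination b₂ * h
  simp only [Prod.mk.injEq, Prod.neg_mk]
  rcases hab with hab | hab <;> rcases hbc with hbc | hbc <;> rw [hab, hbc] at e₁ e₂ <;> omega

lemma plucker (a b c d : ℤ × ℤ) :
    det a c * det b d = det a b * det c d + det a d * det b c := by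
  simp only [det]; ring

lemma det_swap (v w : ℤ × ℤ) : det v w = -det w v := by
  simp only [det]; ring

/-- Because `2` is prime, one factor of a factorization of `±2` is a unit of `ℤ`. -/
lemma unit_factor_of_mul_eq_two {x y : ℤ} (h : x * y = 2 ∨ x * y = -2) :
    (x = 1 ∨ x = -1) ∨ (y = 1 ∨ y = -1) := by
  have hirr : Irreducible (x * y) := by
    rcases h with h | h <;> rw [h]
    · exact Int.prime_two.irreducible
    · exact Int.prime_two.neg.irreducible
  exact (hirr.isUnit_or_isUnit rfl).imp Int.isUnit_iff.mp Int.isUnit_iff.mp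

theorem stmt_13 (α β γ δ : Qhat) (hab : α ≠ β) (hac : α ≠ γ) (had : α ≠ δ)
    (hbc : β ≠ γ) (hbd : β ≠ δ) (hcd : γ ≠ δ)
    (h1 : Frel α β) (h2 : Frel β γ) (h3 : Frel γ δ) (h4 : Frel δ α) :
    Frel α γ ∨ Frel β δ := by
  induction α using Quotient.inductionOn with | h a =>
  induction β using Quotient.inductionOn with | h b =>
  induction γ using Quotient.inductionOn with | h c =>
  induction δ using Quotient.inductionOn with | h d =>
  change FareyPair a.1 b.1 at h1
  change FareyPair b.1 c.1 at h2
  change FareyPair c.1 d.1 at h3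
  change FareyPair d.1 a.1 at h4
  change FareyPair a.1 c.1 ∨ FareyPair b.1 d.1
  have nac : det a.1 c.1 ≠ 0 := fun h =>
    hac (Quotient.sound (eq_or_eq_neg_of_det_eq_zero h1 h2 h))
  have nbd : det b.1 d.1 ≠ 0 := fun h =>
    hbd (Quotient.sound (eq_or_eq_neg_of_det_eq_zero h2 h3 h))
  have hne := mul_ne_zero nac nbd
  apply unit_factor_of_mul_eq_two
  have hP := plucker a.1 b.1 c.1 d.1
  rw [det_swap a.1 d.1] at hP
  unfold FareyPair at h1 h2 h3 h4
  rcases h1 with h1 | h1 <;> rcases h2 with h2 | h2 <;> rcases h3 with h3 | h3 <;>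
    rcases h4 with h4 | h4 <;> rw [h1, h2, h3, h4] at hP <;> omega
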